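/- For every integer n ≥ 1, the 2-dimensional substitution ω_n is primitive: there exists m ∈ ℕ such that for all tiles a, b ∈ T_n, the tile b occurs in the pattern ω_n^m(a). -/

import Mathlib

structure WangTile (C : Type*) where
  right : C
  top : C
  left : C
  bottom : C
deriving DecidableEq

abbrev Lbl : Type := ℤ × ℤ × ℤ

def Vn (n : ℤ) : Set Lbl :=
  {v | 0 ≤ v.1 ∧ v.1 ≤ v.2.1 ∧ v.2.1 ≤ 1 ∧ v.2.1 ≤ v.2.2 ∧ v.2.2 ≤ n + 1}

def hatT {C : Type*} (t : WangTile C) : WangTile C :=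
  ⟨t.top, t.right, t.bottom, t.left⟩

def whiteTiles (n : ℤ) : Set (WangTile Lbl) :=
  {t | ∃ i j : ℤ, 1 ≤ i ∧ i ≤ n ∧ 1 ≤ j ∧ j ≤ n ∧
    t = ⟨(1, 1, i + 1), (1, 1, j + 1), (1, 1, i), (1, 1, j)⟩}

def blueH (n : ℤ) : Set (WangTile Lbl) :=
  {t | ∃ i : ℤ, 0 ≤ i ∧ i ≤ n ∧ t = ⟨(0, 0, i + 1), (1, 1, 1), (0, 0, i), (1, 1, n)⟩}

def greenH (n : ℤ) : Set (WangTile Lbl) :=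
  {t | ∃ i : ℤ, 0 ≤ i ∧ i ≤ n ∧ t = ⟨(0, 1, i + 1), (1, 1, 1), (0, 0, i), (1, 1, n + 1)⟩}

def yellowH (n : ℤ) : Set (WangTile Lbl) :=
  {t | ∃ i : ℤ, 1 ≤ i ∧ i ≤ n ∧ t = ⟨(0, 1, i + 1), (1, 1, 2), (0, 1, i), (1, 1, n + 1)⟩}

def antiH (n : ℤ) : Set (WangTile Lbl) :=
  {t | ∃ i : ℤ, 1 ≤ i ∧ i ≤ n ∧ t = ⟨(0, 0, i + 1), (1, 1, 2), (0, 1, i), (1, 1, n)⟩}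

def junctionTile (n k l r s : ℤ) : WangTile Lbl :=
  ⟨(0, k, l), (0, r, s), (0, s, r + n), (0, l, k + n)⟩

def jPairs : Set (ℤ × ℤ) := {(0, 0), (0, 1), (1, 1)}

def junctions (n : ℤ) : Set (WangTile Lbl) :=
  {t | ∃ k l r s : ℤ, (k, l) ∈ jPairs ∧ (r, s) ∈ jPairs ∧ t = junctionTile n k l r s}

def Text (n : ℤ) : Set (WangTile Lbl) :=
  whiteTiles n ∪ blueH n ∪ greenH n ∪ yellowH n ∪ antiH n ∪
    hatT '' blueH n ∪ hatT '' greenH n ∪ hatT '' yellowH n ∪ hatT '' antiH n ∪ junctions n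

def Dset (n : ℤ) : Set (WangTile Lbl) :=
  {(⟨(0, 0, n + 1), (1, 1, 1), (0, 0, n), (1, 1, n)⟩ : WangTile Lbl),
    hatT (⟨(0, 0, n + 1), (1, 1, 1), (0, 0, n), (1, 1, n)⟩ : WangTile Lbl),
    junctionTile n 0 0 1 1, junctionTile n 1 1 0 0}

def Tmet (n : ℤ) : Set (WangTile Lbl) :=
  Text n \ (antiH n ∪ hatT '' antiH n ∪ Dset n)

def ValidConfig {C : Type*} (T : Set (WangTile C)) (x : ℤ × ℤ → WangTile C) : Prop :=
  (∀ m, x m ∈ T) ∧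
    (∀ m : ℤ × ℤ, (x m).right = (x (m.1 + 1, m.2)).left) ∧
    (∀ m : ℤ × ℤ, (x m).top = (x (m.1, m.2 + 1)).bottom)

def ValidPattern {C : Type*} (T : Set (WangTile C)) (w h : ℕ) (p : ℕ → ℕ → WangTile C) : Prop :=
  (∀ i j, i < w → j < h → p i j ∈ T) ∧
    (∀ i j, i + 1 < w → j < h → (p i j).right = (p (i + 1) j).left) ∧
    (∀ i j, i < w → j + 1 < h → (p i j).top = (p i (j + 1)).bottom)

def bottomWord {C : Type*} (w : ℕ) (p : ℕ → ℕ → WangTile C) : List C :=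
  (List.range w).map fun i => (p i 0).bottom

def topWord {C : Type*} (w h : ℕ) (p : ℕ → ℕ → WangTile C) : List C :=
  (List.range w).map fun i => (p i (h - 1)).top

def leftWord {C : Type*} (h : ℕ) (p : ℕ → ℕ → WangTile C) : List C :=
  (List.range h).map fun j => (p 0 j).left

def rightWord {C : Type*} (w h : ℕ) (p : ℕ → ℕ → WangTile C) : List C :=
  (List.range h).map fun j => (p (w - 1) j).right

def tau (n : ℤ) (v : Lbl) : List Lbl :=
  if v.1 = v.2.2 then
    (0, v.1 - v.2.1 + 1, n + 1) :: List.replicate (n - v.2.2).toNat (1, 1, n + 1)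
  else
    (0, v.1 - v.2.1 + 1, n) ::
      (List.replicate (v.2.2 - v.1 - 1).toNat (1, 1, n) ++
        List.replicate (n + 1 - v.2.2).toNat (1, 1, n + 1))

/-- `q` (of size `w' × h'`) is the image under `ω_n` of the pattern `p` (of size `w × h`)
over the tile set `T`: there are block boundaries `A`, `B` such that each block of `q`
is the unique valid rectangular pattern over `T` whose boundary words are the images
under `τ_n` of the labels of the corresponding tile of `p`. -/
def IsPatternImage (n : ℤ) (T : Set (WangTile Lbl)) (w h : ℕ)
    (p : ℕ → ℕ → WangTile Lbl) (w' h' : ℕ) (q : ℕ → ℕ → WangTile Lbl) : Prop :=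
  ∃ A B : ℕ → ℕ, A 0 = 0 ∧ B 0 = 0 ∧ A w = w' ∧ B h = h' ∧
    (∀ k, k < w → A k < A (k + 1)) ∧ (∀ k, k < h → B k < B (k + 1)) ∧
    ∀ l1 l2, l1 < w → l2 < h →
      ValidPattern T (A (l1 + 1) - A l1) (B (l2 + 1) - B l2)
        (fun i j => q (A l1 + i) (B l2 + j)) ∧
      rightWord (A (l1 + 1) - A l1) (B (l2 + 1) - B l2)
        (fun i j => q (A l1 + i) (B l2 + j)) = tau n (p l1 l2).right ∧
      topWord (A (l1 + 1) - A l1) (B (l2 + 1) - B l2)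
        (fun i j => q (A l1 + i) (B l2 + j)) = tau n (p l1 l2).top ∧
      leftWord (B (l2 + 1) - B l2) (fun i j => q (A l1 + i) (B l2 + j)) =
        tau n (p l1 l2).left ∧
      bottomWord (A (l1 + 1) - A l1) (fun i j => q (A l1 + i) (B l2 + j)) =
        tau n (p l1 l2).bottom

/-- `IterImage n T m a w h q` : `q` (of size `w × h`) is the pattern `ω_n^m(a)`. -/
def IterImage (n : ℤ) (T : Set (WangTile Lbl)) :
    ℕ → WangTile Lbl → ℕ → ℕ → (ℕ → ℕ → WangTile Lbl) → Prop
  | 0, a, w, h, q => w = 1 ∧ h = 1 ∧ q 0 0 = a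
  | m + 1, a, w, h, q =>
      ∃ (w' h' : ℕ) (p : ℕ → ℕ → WangTile Lbl),
        IterImage n T m a w' h' p ∧ IsPatternImage n T w' h' p w h q

/-!
Call `b` a successor of `a` if `b` occurs in `ω_n(a)`. Since `ω_n` maps valid patterns over `T_n` to
valid patterns over `T_n`, block by block, the tiles of `ω_n^m(a)` are those reached from `a` in `m`
steps. The block `ω_n(a)` has a junction tile in its lower left corner, the block of a junction tile
contains all white tiles, and the block of the first white tile has `j^{1,1,1,1}` in its corner.
Hence `j^{1,1,1,1}` is reached from every tile in exactly `m` steps for every `m ≥ 3`. Conversely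
every tile is reached from `j^{1,1,1,1}` in at most `4` steps, through the horizontal tiles in the
order blue, yellow, green, up to the reflection of the plane that exchanges horizontal and vertical
tiles. So every tile is reached from every tile in exactly `7` steps.
-/

section Gluing

variable {A B : ℕ → ℕ}

theorem exists_block_of_lt (hA : A 0 = 0) {w x : ℕ} (hx : x < A w) :
    ∃ k < w, ∃ i, A k + i < A (k + 1) ∧ x = A k + i := by
  induction w with
  | zero => omega
  | succ w ih =>
    rcases lt_or_ge x (A w) with hlt | hge
    · obtain ⟨k, hk, i, hi⟩ := ih hlt
      exact ⟨k, by omega, i, hi⟩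
    · exact ⟨w, w.lt_succ_self, x - A w, by omega, by omega⟩

theorem exists_glue {α : Type*} (hA : Monotone A) (P : ℕ → ℕ → α) :
    ∃ q : ℕ → α, ∀ k i, A k + i < A (k + 1) → q (A k + i) = P k i := by
  have hvalue : ∀ x, ∃ y, ∀ k i, x = A k + i → x < A (k + 1) → y = P k i := by
    intro x
    by_cases hx : ∃ k, A k ≤ x ∧ x < A (k + 1)
    · obtain ⟨k, hk, hk'⟩ := hx
      refine ⟨P k (x - A k), ?_⟩
      rintro l i rfl hl
      have hkl : k < l + 1 := hA.reflect_lt (hk.trans_lt hl)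
      have hlk : l < k + 1 := hA.reflect_lt ((Nat.le_add_right _ i).trans_lt hk')
      obtain rfl : k = l := by omega
      rw [Nat.add_sub_cancel_left]
    · exact ⟨P 0 0, fun k i hki hk => absurd ⟨k, by omega, hk⟩ hx⟩
  choose q hq using hvalue
  exact ⟨q, fun k i => hq _ k i rfl⟩

theorem exists_glue₂ {α : Type*} (hA : Monotone A) (hB : Monotone B)
    (P : ℕ → ℕ → ℕ → ℕ → α) :
    ∃ q : ℕ → ℕ → α, ∀ k l i j, A k + i < A (k + 1) → B l + j < B (l + 1) →
      q (A k + i) (B l + j) = P k l i j := by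
  choose column hcolumn using fun k i => exists_glue hB fun l j => P k l i j
  obtain ⟨q, hq⟩ := exists_glue hA column
  exact ⟨q, fun k l i j hi hj => by rw [hq k i hi, hcolumn k i l j hj]⟩

end Gluing

section Substitution

variable {n : ℤ} {T : Set (WangTile Lbl)} {t : WangTile Lbl} {w h : ℕ}
  {p q : ℕ → ℕ → WangTile Lbl}

/-- The pattern `q` of size `w × h` over `T` is the image of the tile `t` under the 2-dimensional
substitution with boundary words `τ_n`: this is the condition that `IsPatternImage` imposes on
each block. -/
structure IsTileImage (n : ℤ) (T : Set (WangTile Lbl)) (t : WangTile Lbl) (w h : ℕ)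
    (q : ℕ → ℕ → WangTile Lbl) : Prop where
  valid : ValidPattern T w h q
  right : rightWord w h q = tau n t.right
  top : topWord w h q = tau n t.top
  left : leftWord h q = tau n t.left
  bottom : bottomWord w q = tau n t.bottom

theorem IsTileImage.congr (hp : IsTileImage n T t w h p) (hw : 0 < w) (hh : 0 < h)
    (hqp : ∀ i < w, ∀ j < h, q i j = p i j) : IsTileImage n T t w h q where
  valid := by
    refine ⟨fun i j hi hj => ?_, fun i j hi hj => ?_, fun i j hi hj => ?_⟩
    · rw [hqp i hi j hj]
      exact hp.valid.1 i j hi hj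
    · rw [hqp i (by omega) j hj, hqp (i + 1) hi j hj]
      exact hp.valid.2.1 i j hi hj
    · rw [hqp i hi j (by omega), hqp i hi (j + 1) hj]
      exact hp.valid.2.2 i j hi hj
  right := hp.right ▸ List.map_congr_left fun j hj => by
    rw [hqp (w - 1) (by omega) j (List.mem_range.1 hj)]
  top := hp.top ▸ List.map_congr_left fun i hi => by
    rw [hqp i (List.mem_range.1 hi) (h - 1) (by omega)]
  left := hp.left ▸ List.map_congr_left fun j hj => by
    rw [hqp 0 hw j (List.mem_range.1 hj)]
  bottom := hp.bottom ▸ List.map_congr_left fun i hi => by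
    rw [hqp i (List.mem_range.1 hi) 0 hh]

theorem IsTileImage.length_tau_top (hq : IsTileImage n T t w h q) :
    (tau n t.top).length = (tau n t.bottom).length := by
  simp only [← hq.top, ← hq.bottom, topWord, bottomWord, List.length_map]

theorem IsTileImage.length_tau_right (hq : IsTileImage n T t w h q) :
    (tau n t.right).length = (tau n t.left).length := by
  simp only [← hq.right, ← hq.left, rightWord, leftWord, List.length_map]

theorem IsTileImage.right_eq_left {t' : WangTile Lbl} {w' : ℕ} (hp : IsTileImage n T t w h p)
    (hq : IsTileImage n T t' w' h q) (htt' : t.right = t'.left) {j : ℕ} (hj : j < h) :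
    (p (w - 1) j).right = (q 0 j).left := by
  have hwords : rightWord w h p = leftWord h q := by rw [hp.right, hq.left, htt']
  exact List.map_inj_left.1 hwords j (List.mem_range.2 hj)

theorem IsTileImage.top_eq_bottom {t' : WangTile Lbl} {h' : ℕ} (hp : IsTileImage n T t w h p)
    (hq : IsTileImage n T t' w h' q) (htt' : t.top = t'.bottom) {i : ℕ} (hi : i < w) :
    (p i (h - 1)).top = (q i 0).bottom := by
  have hwords : topWord w h p = bottomWord w q := by rw [hp.top, hq.bottom, htt']
  exact List.map_inj_left.1 hwords i (List.mem_range.2 hi)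

theorem IsPatternImage.validPattern {w' h' : ℕ} (hq : IsPatternImage n T w h p w' h' q)
    (hp : ValidPattern T w h p) : ValidPattern T w' h' q := by
  obtain ⟨A, B, hA0, hB0, rfl, rfl, hA, hB, hblock⟩ := hq
  have himage : ∀ k < w, ∀ l < h, IsTileImage n T (p k l) (A (k + 1) - A k) (B (l + 1) - B l)
      fun i j => q (A k + i) (B l + j) := fun k hk l hl =>
    let ⟨hvalid, hright, htop, hleft, hbottom⟩ := hblock k l hk hl
    ⟨hvalid, hright, htop, hleft, hbottom⟩
  refine ⟨fun x y hx hy => ?_, fun x y hx hy => ?_, fun x y hx hy => ?_⟩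
  · obtain ⟨k, hk, i, hi, rfl⟩ := exists_block_of_lt hA0 hx
    obtain ⟨l, hl, j, hj, rfl⟩ := exists_block_of_lt hB0 hy
    exact (himage k hk l hl).valid.1 i j (by omega) (by omega)
  · obtain ⟨k, hk, i, hi, rfl⟩ := exists_block_of_lt hA0 (Nat.lt_of_succ_lt hx)
    obtain ⟨l, hl, j, hj, rfl⟩ := exists_block_of_lt hB0 hy
    rcases Nat.lt_or_ge (A k + i + 1) (A (k + 1)) with hinside | hlast
    · exact (himage k hk l hl).valid.2.1 i j (by omega) (by omega)
    · have hnext : A k + i + 1 = A (k + 1) := by omega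
      have hk' : k + 1 < w := lt_of_le_of_ne hk (by rintro rfl; omega)
      have hedge := (himage k hk l hl).right_eq_left (himage (k + 1) hk' l hl)
        (hp.2.1 k l hk' hl) (j := j) (by omega)
      simpa only [hnext, show A (k + 1) - A k - 1 = i by omega, add_zero] using hedge
  · obtain ⟨k, hk, i, hi, rfl⟩ := exists_block_of_lt hA0 hx
    obtain ⟨l, hl, j, hj, rfl⟩ := exists_block_of_lt hB0 (Nat.lt_of_succ_lt hy)
    rcases Nat.lt_or_ge (B l + j + 1) (B (l + 1)) with hinside | hlast
    · exact (himage k hk l hl).valid.2.2 i j (by omega) (by omega)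
    · have hnext : B l + j + 1 = B (l + 1) := by omega
      have hl' : l + 1 < h := lt_of_le_of_ne hl (by rintro rfl; omega)
      have hedge := (himage k hk l hl).top_eq_bottom (himage k hk (l + 1) hl')
        (hp.2.2 k l hk hl') (i := i) (by omega)
      simpa only [hnext, show B (l + 1) - B l - 1 = j by omega, add_zero] using hedge

theorem length_tau_pos (n : ℤ) (v : Lbl) : 0 < (tau n v).length := by
  unfold tau
  split_ifs <;> exact Nat.succ_pos _

/-- `ω` assigns to each tile of `T` its image under the 2-dimensional substitution over `T` with
boundary words `τ_n`. The values of `ω t i j` outside the rectangle of size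
`|τ_n(t.bottom)| × |τ_n(t.left)|` are irrelevant. -/
def IsTauSubstitution (n : ℤ) (T : Set (WangTile Lbl)) (ω : WangTile Lbl → ℕ → ℕ → WangTile Lbl) :
    Prop :=
  ∀ t ∈ T, IsTileImage n T t (tau n t.bottom).length (tau n t.left).length (ω t)

/-- The tile `b` occurs in the pattern `ω(a)`. -/
def OccursInImage (n : ℤ) (ω : WangTile Lbl → ℕ → ℕ → WangTile Lbl) (a b : WangTile Lbl) : Prop :=
  ∃ i < (tau n a.bottom).length, ∃ j < (tau n a.left).length, ω a i j = b

variable {ω : WangTile Lbl → ℕ → ℕ → WangTile Lbl}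

theorem IsTauSubstitution.length_tau_bottom (hω : IsTauSubstitution n T ω)
    (hp : ValidPattern T w h p) {k l : ℕ} (hk : k < w) (hl : l < h) :
    (tau n (p k l).bottom).length = (tau n (p k 0).bottom).length := by
  induction l with
  | zero => rfl
  | succ l ih =>
    have hl' : l < h := Nat.lt_of_succ_lt hl
    rw [← hp.2.2 k l hk hl, (hω _ (hp.1 k l hk hl')).length_tau_top, ih hl']

theorem IsTauSubstitution.length_tau_left (hω : IsTauSubstitution n T ω)
    (hp : ValidPattern T w h p) {k l : ℕ} (hk : k < w) (hl : l < h) :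
    (tau n (p k l).left).length = (tau n (p 0 l).left).length := by
  induction k with
  | zero => rfl
  | succ k ih =>
    have hk' : k < w := Nat.lt_of_succ_lt hk
    rw [← hp.2.1 k l hk hl, (hω _ (hp.1 k l hk' hl)).length_tau_right, ih hk']

theorem IsTauSubstitution.exists_isPatternImage (hω : IsTauSubstitution n T ω)
    (hp : ValidPattern T w h p) :
    ∃ (w' h' : ℕ) (q : ℕ → ℕ → WangTile Lbl), IsPatternImage n T w h p w' h' q ∧
      ∀ k < w, ∀ l < h, ∀ b, OccursInImage n ω (p k l) b → ∃ i < w', ∃ j < h', q i j = b := by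
  let A : ℕ → ℕ := fun k => ∑ i ∈ Finset.range k, (tau n (p i 0).bottom).length
  let B : ℕ → ℕ := fun l => ∑ j ∈ Finset.range l, (tau n (p 0 j).left).length
  have hA : StrictMono A := strictMono_nat_of_lt_succ fun k => by
    simp only [A, Finset.sum_range_succ, Nat.lt_add_right_iff_pos, length_tau_pos]
  have hB : StrictMono B := strictMono_nat_of_lt_succ fun l => by
    simp only [B, Finset.sum_range_succ, Nat.lt_add_right_iff_pos, length_tau_pos]
  have hwidth : ∀ k < w, ∀ l < h, A (k + 1) = A k + (tau n (p k l).bottom).length :=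
    fun k hk l hl => by rw [hω.length_tau_bottom hp hk hl]; exact Finset.sum_range_succ _ k
  have hheight : ∀ k < w, ∀ l < h, B (l + 1) = B l + (tau n (p k l).left).length :=
    fun k hk l hl => by rw [hω.length_tau_left hp hk hl]; exact Finset.sum_range_succ _ l
  obtain ⟨q, hq⟩ := exists_glue₂ hA.monotone hB.monotone fun k l => ω (p k l)
  refine ⟨A w, B h, q, ⟨A, B, rfl, rfl, rfl, rfl, fun k _ => hA k.lt_succ_self,
    fun l _ => hB l.lt_succ_self, fun k l hk hl => ?_⟩, ?_⟩
  · have himage := (hω _ (hp.1 k l hk hl)).congr (q := fun i j => q (A k + i) (B l + j))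
      (length_tau_pos n _) (length_tau_pos n _) fun i hi j hj =>
        hq k l i j (by rw [hwidth k hk l hl]; omega) (by rw [hheight k hk l hl]; omega)
    rw [hwidth k hk l hl, hheight k hk l hl, Nat.add_sub_cancel_left, Nat.add_sub_cancel_left]
    exact ⟨himage.valid, himage.right, himage.top, himage.left, himage.bottom⟩
  · rintro k hk l hl _ ⟨i, hi, j, hj, rfl⟩
    have hi' : A k + i < A (k + 1) := by rw [hwidth k hk l hl]; omega
    have hj' : B l + j < B (l + 1) := by rw [hheight k hk l hl]; omega
    exact ⟨A k + i, hi'.trans_le (hA.monotone hk), B l + j, hj'.trans_le (hB.monotone hl),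
      hq k l i j hi' hj'⟩

/-- `ReachesIn r m a b`: there is a chain `a = x₀, x₁, …, x_m = b` with `r xᵢ xᵢ₊₁`, that is, `b`
is related to `a` by the `m`-th power of `r`. -/
inductive ReachesIn {α : Type*} (r : α → α → Prop) : ℕ → α → α → Prop
  | refl (a : α) : ReachesIn r 0 a a
  | tail {m : ℕ} {a b c : α} (hab : ReachesIn r m a b) (hbc : r b c) : ReachesIn r (m + 1) a c

theorem IsTauSubstitution.exists_iterImage (hω : IsTauSubstitution n T ω) {a : WangTile Lbl}
    (ha : a ∈ T) (m : ℕ) :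
    ∃ (w h : ℕ) (q : ℕ → ℕ → WangTile Lbl), IterImage n T m a w h q ∧ ValidPattern T w h q ∧
      ∀ b, ReachesIn (OccursInImage n ω) m a b → ∃ i < w, ∃ j < h, q i j = b := by
  induction m with
  | zero =>
    refine ⟨1, 1, fun _ _ => a, ⟨rfl, rfl, rfl⟩,
      ⟨fun _ _ _ _ => ha, fun _ _ hi _ => by omega, fun _ _ _ hj => by omega⟩, ?_⟩
    rintro _ ⟨⟩
    exact ⟨0, one_pos, 0, one_pos, rfl⟩
  | succ m ih =>
    obtain ⟨w, h, p, hiter, hp, hreach⟩ := ih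
    obtain ⟨w', h', q, himage, hoccurs⟩ := hω.exists_isPatternImage hp
    refine ⟨w', h', q, ⟨w, h, p, hiter, himage⟩, himage.validPattern hp, ?_⟩
    rintro b (_ | ⟨hac, hcb⟩)
    obtain ⟨k, hk, l, hl, rfl⟩ := hreach _ hac
    exact hoccurs k hk l hl b hcb

end Substitution

section ReachesIn

variable {α : Type*} {r : α → α → Prop} {m k : ℕ} {a b c : α}

theorem ReachesIn.single (hab : r a b) : ReachesIn r 1 a b :=
  (ReachesIn.refl a).tail hab

theorem ReachesIn.trans (hab : ReachesIn r m a b) (hbc : ReachesIn r k b c) :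
    ReachesIn r (m + k) a c := by
  induction hbc with
  | refl => exact hab
  | tail _ hcd ih => exact (ih hab).tail hcd

theorem ReachesIn.map {f : α → α} (hf : ∀ a b, r a b → r (f a) (f b)) (hab : ReachesIn r m a b) :
    ReachesIn r m (f a) (f b) := by
  induction hab with
  | refl => exact .refl _
  | tail _ hbc ih => exact ih.tail (hf _ _ hbc)

end ReachesIn

section Tiles

variable {n : ℤ} {t : WangTile Lbl}

/-- The white tile of indices `i`, `j`. -/
def whiteTile (i j : ℤ) : WangTile Lbl :=
  ⟨(1, 1, i + 1), (1, 1, j + 1), (1, 1, i), (1, 1, j)⟩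

/-- The horizontal tile of index `i` whose left and right labels have middle letters `f` and `e`:
it is blue, green, yellow or antigreen when `(f, e)` is `(0, 0)`, `(0, 1)`, `(1, 1)` or `(1, 0)`
respectively. -/
def horizontalTile (n f e i : ℤ) : WangTile Lbl :=
  ⟨(0, e, i + 1), (1, 1, f + 1), (0, f, i), (1, 1, e + n)⟩

/-- A parametrization of the metallic mean tile set `T_n`: the condition `f ≤ e` excludes the
antigreen tiles, `i < e + n` the blue tile of index `n`, and `k ≤ s` and `r ≤ l` the junction
tiles `j^{1,1,0,0}` and `j^{0,0,1,1}`. -/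
inductive MetallicTile (n : ℤ) : WangTile Lbl → Prop
  | white {i j : ℤ} (hi : 1 ≤ i) (hi' : i ≤ n) (hj : 1 ≤ j) (hj' : j ≤ n) :
      MetallicTile n (whiteTile i j)
  | horizontal {f e i : ℤ} (hf : 0 ≤ f) (hfe : f ≤ e) (he : e ≤ 1) (hi : f ≤ i)
      (hi' : i < e + n) : MetallicTile n (horizontalTile n f e i)
  | vertical {f e i : ℤ} (hf : 0 ≤ f) (hfe : f ≤ e) (he : e ≤ 1) (hi : f ≤ i)
      (hi' : i < e + n) : MetallicTile n (hatT (horizontalTile n f e i))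
  | junction {k l r s : ℤ} (hk : 0 ≤ k) (hkl : k ≤ l) (hl : l ≤ 1) (hr : 0 ≤ r) (hrs : r ≤ s)
      (hs : s ≤ 1) (hks : k ≤ s) (hrl : r ≤ l) : MetallicTile n (junctionTile n k l r s)

protected theorem MetallicTile.hatT (ht : MetallicTile n t) : MetallicTile n (hatT t) := by
  cases ht with
  | white hi hi' hj hj' => exact .white hj hj' hi hi'
  | horizontal hf hfe he hi hi' => exact .vertical hf hfe he hi hi'
  | vertical hf hfe he hi hi' => exact .horizontal hf hfe he hi hi'
  | junction hk hkl hl hr hrs hs hks hrl => exact .junction hr hrs hs hk hkl hl hrl hks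

theorem mem_image_hatT {S : Set (WangTile Lbl)} : t ∈ hatT '' S ↔ hatT t ∈ S :=
  ⟨by rintro ⟨u, hu, rfl⟩; exact hu, fun ht => ⟨_, ht, rfl⟩⟩

theorem mem_blueH_iff :
    t ∈ blueH n ↔ ∃ i : ℤ, 0 ≤ i ∧ i ≤ n ∧ t = horizontalTile n 0 0 i := by
  simp only [blueH, horizontalTile, Set.mem_ofPred_eq, zero_add]

theorem mem_greenH_iff :
    t ∈ greenH n ↔ ∃ i : ℤ, 0 ≤ i ∧ i ≤ n ∧ t = horizontalTile n 0 1 i := by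
  simp only [greenH, horizontalTile, Set.mem_ofPred_eq, zero_add, add_comm n]

theorem mem_yellowH_iff :
    t ∈ yellowH n ↔ ∃ i : ℤ, 1 ≤ i ∧ i ≤ n ∧ t = horizontalTile n 1 1 i := by
  simp only [yellowH, horizontalTile, Set.mem_ofPred_eq, one_add_one_eq_two, add_comm n]

theorem mem_antiH_iff :
    t ∈ antiH n ↔ ∃ i : ℤ, 1 ≤ i ∧ i ≤ n ∧ t = horizontalTile n 1 0 i := by
  simp only [antiH, horizontalTile, Set.mem_ofPred_eq, one_add_one_eq_two, zero_add]

theorem mem_jPairs_iff {k l : ℤ} : (k, l) ∈ jPairs ↔ 0 ≤ k ∧ k ≤ l ∧ l ≤ 1 := by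
  simp only [jPairs, Set.mem_insert_iff, Set.mem_singleton_iff, Prod.mk.injEq]
  omega

theorem mem_Dset_iff :
    t ∈ Dset n ↔ t = horizontalTile n 0 0 n ∨ hatT t = horizontalTile n 0 0 n ∨
      t = junctionTile n 0 0 1 1 ∨ t = junctionTile n 1 1 0 0 := by
  have hhat (u : WangTile Lbl) : t = hatT u ↔ hatT t = u :=
    ⟨by rintro rfl; rfl, by rintro rfl; rfl⟩
  simp only [Dset, horizontalTile, Set.mem_insert_iff, Set.mem_singleton_iff, zero_add, hhat]

theorem metallicTile_of_mem_junctions (ht : t ∈ junctions n) (hD : t ∉ Dset n) :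
    MetallicTile n t := by
  obtain ⟨k, l, r, s, hkl, hrs, rfl⟩ := ht
  obtain ⟨hk, hkl, hl⟩ := mem_jPairs_iff.1 hkl
  obtain ⟨hr, hrs, hs⟩ := mem_jPairs_iff.1 hrs
  have hD' : ¬(k = 0 ∧ l = 0 ∧ r = 1 ∧ s = 1) ∧ ¬(k = 1 ∧ l = 1 ∧ r = 0 ∧ s = 0) := by
    constructor <;>
    · rintro ⟨rfl, rfl, rfl, rfl⟩
      simp [mem_Dset_iff] at hD
  exact .junction hk hkl hl hr hrs hs (by omega) (by omega)

theorem metallicTile_of_mem_horizontal (ht : t ∈ blueH n ∨ t ∈ greenH n ∨ t ∈ yellowH n)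
    (hD : t ∉ Dset n) : MetallicTile n t := by
  rw [mem_blueH_iff, mem_greenH_iff, mem_yellowH_iff] at ht
  obtain ⟨i, hi, hi', rfl⟩ | ⟨i, hi, hi', rfl⟩ | ⟨i, hi, hi', rfl⟩ := ht
  · have hin : i ≠ n := by
      rintro rfl
      exact hD (mem_Dset_iff.2 (.inl rfl))
    exact .horizontal le_rfl le_rfl zero_le_one hi (by omega)
  · exact .horizontal le_rfl zero_le_one le_rfl hi (by omega)
  · exact .horizontal zero_le_one le_rfl le_rfl hi (by omega)

theorem hatT_mem_Dset_iff : hatT t ∈ Dset n ↔ t ∈ Dset n := by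
  have hhat (k l r s : ℤ) : hatT t = junctionTile n k l r s ↔ t = junctionTile n r s k l :=
    ⟨fun h => congrArg hatT h, by rintro rfl; rfl⟩
  have hinv : hatT (hatT t) = t := rfl
  rw [mem_Dset_iff, mem_Dset_iff, hinv, hhat, hhat]
  tauto

theorem metallicTile_of_mem_Tmet (ht : t ∈ Tmet n) : MetallicTile n t := by
  simp only [Tmet, Text, Set.mem_sdiff, Set.mem_union, mem_image_hatT, not_or] at ht
  obtain ⟨ht, ⟨hanti, hanti'⟩, hD⟩ := ht
  have hD' : hatT t ∉ Dset n := mt hatT_mem_Dset_iff.1 hD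
  rcases ht with ((((((((hwhite | hblue) | hgreen) | hyellow) | ht) | hblue) | hgreen) | hyellow) |
    ht) | hjunction
  · obtain ⟨i, j, hi, hi', hj, hj', rfl⟩ := hwhite
    exact .white hi hi' hj hj'
  · exact metallicTile_of_mem_horizontal (.inl hblue) hD
  · exact metallicTile_of_mem_horizontal (.inr (.inl hgreen)) hD
  · exact metallicTile_of_mem_horizontal (.inr (.inr hyellow)) hD
  · exact absurd ht hanti
  · exact (metallicTile_of_mem_horizontal (.inl hblue) hD').hatT
  · exact (metallicTile_of_mem_horizontal (.inr (.inl hgreen)) hD').hatT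
  · exact (metallicTile_of_mem_horizontal (.inr (.inr hyellow)) hD').hatT
  · exact absurd ht hanti'
  · exact metallicTile_of_mem_junctions hjunction hD

theorem MetallicTile.notMem_antiH (ht : MetallicTile n t) : t ∉ antiH n := by
  rw [mem_antiH_iff]
  rintro ⟨i, -, -, h⟩
  cases ht <;> simp only [whiteTile, horizontalTile, junctionTile, hatT, WangTile.mk.injEq,
    Prod.mk.injEq] at h <;> omega

theorem MetallicTile.notMem_Dset (ht : MetallicTile n t) : t ∉ Dset n := by
  rw [mem_Dset_iff]
  cases ht <;> simp only [whiteTile, horizontalTile, junctionTile, hatT, WangTile.mk.injEq,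
    Prod.mk.injEq] <;> omega

theorem mem_horizontal_of_bounds {f e i : ℤ} (hf : 0 ≤ f) (hfe : f ≤ e) (he : e ≤ 1) (hi : f ≤ i)
    (hi' : i < e + n) :
    horizontalTile n f e i ∈ blueH n ∪ greenH n ∪ yellowH n := by
  have hcolor : f = 0 ∧ e = 0 ∨ f = 0 ∧ e = 1 ∨ f = 1 ∧ e = 1 := by omega
  simp only [Set.mem_union, mem_blueH_iff, mem_greenH_iff, mem_yellowH_iff]
  rcases hcolor with ⟨rfl, rfl⟩ | ⟨rfl, rfl⟩ | ⟨rfl, rfl⟩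
  · exact .inl (.inl ⟨i, hi, by omega, rfl⟩)
  · exact .inl (.inr ⟨i, hi, by omega, rfl⟩)
  · exact .inr ⟨i, hi, by omega, rfl⟩

theorem MetallicTile.mem_Text (ht : MetallicTile n t) : t ∈ Text n := by
  simp only [Text, Set.mem_union, mem_image_hatT]
  cases ht with
  | white hi hi' hj hj' =>
    have hwhite : whiteTile _ _ ∈ whiteTiles n := ⟨_, _, hi, hi', hj, hj', rfl⟩
    tauto
  | horizontal hf hfe he hi hi' =>
    have hhorizontal := mem_horizontal_of_bounds hf hfe he hi hi'
    simp only [Set.mem_union] at hhorizontal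
    tauto
  | vertical hf hfe he hi hi' =>
    have hhorizontal := mem_horizontal_of_bounds hf hfe he hi hi'
    simp only [Set.mem_union] at hhorizontal
    tauto
  | junction hk hkl hl hr hrs hs =>
    exact .inr ⟨_, _, _, _, mem_jPairs_iff.2 ⟨hk, hkl, hl⟩, mem_jPairs_iff.2 ⟨hr, hrs, hs⟩, rfl⟩

theorem mem_Tmet_iff : t ∈ Tmet n ↔ MetallicTile n t := by
  refine ⟨metallicTile_of_mem_Tmet, fun ht => ⟨ht.mem_Text, ?_⟩⟩
  simp only [Set.mem_union, mem_image_hatT, not_or]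
  exact ⟨⟨ht.notMem_antiH, ht.hatT.notMem_antiH⟩, ht.notMem_Dset⟩

end Tiles

section Block

variable {n : ℤ} {t : WangTile Lbl} {v : Lbl} {i j : ℕ}

/-- The difference between the last entry of the letter of index `i` of `τ_n(v)` and `n`. -/
def tauStep (v : Lbl) (i : ℤ) : ℤ :=
  if v.2.2 - v.1 ≤ i then 1 else 0

/-- The letter of index `i` of the word `τ_n(v)`. -/
def tauLetter (n : ℤ) (v : Lbl) : ℕ → Lbl
  | 0 => (0, v.1 - v.2.1 + 1, tauStep v 0 + n)
  | i + 1 => (1, 1, tauStep v (i + 1) + n)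

theorem length_tau (hn : 1 ≤ n) (hv : v ∈ Vn n) : (tau n v).length = (n + 1 - v.1).toNat := by
  obtain ⟨h0, h01, h1, h12, h2⟩ := hv
  unfold tau
  split_ifs <;> simp only [List.length_cons, List.length_append, List.length_replicate] <;> omega

theorem lt_length_tau_iff (hn : 1 ≤ n) (hv : v ∈ Vn n) :
    i < (tau n v).length ↔ i + v.1 ≤ n := by
  rw [length_tau hn hv]
  omega

theorem tau_eq_map (hv : v ∈ Vn n) :
    tau n v = (List.range (tau n v).length).map (tauLetter n v) := by
  refine List.ext_getElem (by simp) fun i hi hi' => ?_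
  obtain ⟨-, h01, -, h12, -⟩ := hv
  simp only [List.getElem_map, List.getElem_range]
  cases i with
  | zero =>
    simp only [tau, tauLetter, tauStep]
    split_ifs <;> simp only [List.getElem_cons_zero, Prod.mk.injEq, true_and] <;> omega
  | succ i =>
    simp only [tau, tauLetter]
    by_cases hv : v.1 = v.2.2
    · have hstep : tauStep v (i + 1) = 1 := if_pos (by omega)
      simp only [hv, if_true, List.getElem_cons_succ, List.getElem_replicate, hstep, add_comm]
    · simp only [hv, if_false, List.getElem_cons_succ, List.getElem_append,
        List.getElem_replicate, List.length_replicate, tauStep]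
      split_ifs <;> simp only [Prod.mk.injEq, true_and] <;> omega

/-- The pattern `ω_n(t)`: a junction tile in the lower left corner, horizontal tiles along the
bottom, vertical tiles along the left side, and white tiles elsewhere. -/
def omegaBlock (n : ℤ) (t : WangTile Lbl) : ℕ → ℕ → WangTile Lbl
  | 0, 0 => junctionTile n (tauStep t.bottom 0) (t.bottom.1 - t.bottom.2.1 + 1)
      (tauStep t.left 0) (t.left.1 - t.left.2.1 + 1)
  | i + 1, 0 => horizontalTile n (tauStep t.bottom i) (tauStep t.bottom (i + 1))
      (t.bottom.1 - t.bottom.2.1 + i + 1)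
  | 0, j + 1 => hatT (horizontalTile n (tauStep t.left j) (tauStep t.left (j + 1))
      (t.left.1 - t.left.2.1 + j + 1))
  | i + 1, j + 1 => whiteTile (i + 1 + tauStep t.left j) (j + 1 + tauStep t.bottom i)

theorem omegaBlock_hatT (n : ℤ) (t : WangTile Lbl) (i j : ℕ) :
    omegaBlock n (hatT t) i j = hatT (omegaBlock n t j i) := by
  cases i <;> cases j <;> rfl

theorem omegaBlock_bottom (n : ℤ) (t : WangTile Lbl) (i : ℕ) :
    (omegaBlock n t i 0).bottom = tauLetter n t.bottom i := by
  cases i <;> rfl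

theorem omegaBlock_left (n : ℤ) (t : WangTile Lbl) (j : ℕ) :
    (omegaBlock n t 0 j).left = tauLetter n t.left j := by
  cases j <;> rfl

theorem omegaBlock_zero_top (n : ℤ) (t : WangTile Lbl) (j : ℕ) :
    (omegaBlock n t 0 j).top = (0, tauStep t.left j, t.left.1 - t.left.2.1 + j + 1) := by
  cases j <;> simp [omegaBlock, junctionTile, horizontalTile, hatT, add_assoc]

theorem omegaBlock_succ_top (n : ℤ) (t : WangTile Lbl) (i j : ℕ) :
    (omegaBlock n t (i + 1) j).top = (1, 1, j + 1 + tauStep t.bottom i) := by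
  cases j <;> simp [omegaBlock, horizontalTile, whiteTile, add_comm, add_left_comm]

theorem omegaBlock_top_eq_bottom (n : ℤ) (t : WangTile Lbl) (i j : ℕ) :
    (omegaBlock n t i j).top = (omegaBlock n t i (j + 1)).bottom := by
  cases i with
  | zero => rw [omegaBlock_zero_top]; rfl
  | succ i => rw [omegaBlock_succ_top]; rfl

theorem omegaBlock_right_eq_left (n : ℤ) (t : WangTile Lbl) (i j : ℕ) :
    (omegaBlock n t i j).right = (omegaBlock n t (i + 1) j).left := by
  have hhat := omegaBlock_top_eq_bottom n (hatT t) j i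
  rwa [omegaBlock_hatT, omegaBlock_hatT] at hhat

namespace MetallicTile

theorem bottom_mem_Vn (hn : 1 ≤ n) (ht : MetallicTile n t) : t.bottom ∈ Vn n := by
  simp only [Vn, Set.mem_ofPred_eq]
  cases ht <;> simp only [whiteTile, horizontalTile, junctionTile, hatT] <;> omega

theorem top_mem_Vn (hn : 1 ≤ n) (ht : MetallicTile n t) : t.top ∈ Vn n := by
  simp only [Vn, Set.mem_ofPred_eq]
  cases ht <;> simp only [whiteTile, horizontalTile, junctionTile, hatT] <;> omega

theorem top_fst (ht : MetallicTile n t) : t.top.1 = t.bottom.1 := by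
  cases ht <;> rfl

theorem bottom_le_of_eq_zero (ht : MetallicTile n t) (hb : t.bottom.2.1 = 0) :
    t.bottom.2.2 ≤ n := by
  revert hb
  cases ht <;> simp only [whiteTile, horizontalTile, junctionTile, hatT] <;> omega

theorem le_left_of_bottom_eq_zero (ht : MetallicTile n t) (hb : t.bottom.1 = 0) :
    n ≤ t.left.2.2 := by
  revert hb
  cases ht <;> simp only [whiteTile, horizontalTile, junctionTile, hatT] <;> omega

theorem left_lt_of_bottom_lt (hn : 1 ≤ n) (ht : MetallicTile n t) (hb : t.bottom.1 < t.bottom.2.1) :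
    t.left.1 < t.left.2.2 := by
  revert hb
  cases ht <;> simp only [whiteTile, horizontalTile, junctionTile, hatT] <;> omega

theorem left_mem_Vn (hn : 1 ≤ n) (ht : MetallicTile n t) : t.left ∈ Vn n :=
  ht.hatT.bottom_mem_Vn hn

theorem right_mem_Vn (hn : 1 ≤ n) (ht : MetallicTile n t) : t.right ∈ Vn n :=
  ht.hatT.top_mem_Vn hn

theorem length_tau_top (hn : 1 ≤ n) (ht : MetallicTile n t) :
    (tau n t.top).length = (tau n t.bottom).length := by
  rw [length_tau hn (ht.top_mem_Vn hn), length_tau hn (ht.bottom_mem_Vn hn), ht.top_fst]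

theorem length_tau_right (hn : 1 ≤ n) (ht : MetallicTile n t) :
    (tau n t.right).length = (tau n t.left).length :=
  ht.hatT.length_tau_top hn

theorem omegaBlock_zero_zero (hn : 1 ≤ n) (ht : MetallicTile n t) :
    MetallicTile n (omegaBlock n t 0 0) := by
  obtain ⟨hb0, hb01, hb1, hb12, -⟩ := ht.bottom_mem_Vn hn
  obtain ⟨hl0, hl01, hl1, hl12, -⟩ := ht.left_mem_Vn hn
  have hleft : t.bottom.1 < t.bottom.2.1 → t.left.1 < t.left.2.2 := ht.left_lt_of_bottom_lt hn
  have hbottom : t.left.1 < t.left.2.1 → t.bottom.1 < t.bottom.2.2 :=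
    ht.hatT.left_lt_of_bottom_lt hn
  unfold omegaBlock tauStep
  apply MetallicTile.junction <;> omega

theorem omegaBlock_succ_zero (hn : 1 ≤ n) (ht : MetallicTile n t)
    (hi : i + 1 < (tau n t.bottom).length) : MetallicTile n (omegaBlock n t (i + 1) 0) := by
  have hb := ht.bottom_mem_Vn hn
  have hi' : (i + 1 : ℕ) + t.bottom.1 ≤ n := (lt_length_tau_iff hn hb).1 hi
  obtain ⟨hb0, hb01, hb1, hb12, -⟩ := hb
  have hbottom : t.bottom.2.1 = 0 → t.bottom.2.2 ≤ n := ht.bottom_le_of_eq_zero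
  unfold omegaBlock tauStep
  apply MetallicTile.horizontal <;> omega

theorem omegaBlock_succ_succ (hn : 1 ≤ n) (ht : MetallicTile n t)
    (hi : i + 1 < (tau n t.bottom).length) (hj : j + 1 < (tau n t.left).length) :
    MetallicTile n (omegaBlock n t (i + 1) (j + 1)) := by
  have hb := ht.bottom_mem_Vn hn
  have hl := ht.left_mem_Vn hn
  have hi' : (i + 1 : ℕ) + t.bottom.1 ≤ n := (lt_length_tau_iff hn hb).1 hi
  have hj' : (j + 1 : ℕ) + t.left.1 ≤ n := (lt_length_tau_iff hn hl).1 hj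
  have hb0 : 0 ≤ t.bottom.1 := hb.1
  have hl0 : 0 ≤ t.left.1 := hl.1
  have hleft : t.bottom.1 = 0 → n ≤ t.left.2.2 := ht.le_left_of_bottom_eq_zero
  have hbottom : t.left.1 = 0 → n ≤ t.bottom.2.2 := ht.hatT.le_left_of_bottom_eq_zero
  unfold omegaBlock tauStep
  apply MetallicTile.white <;> omega

protected theorem omegaBlock (hn : 1 ≤ n) (ht : MetallicTile n t)
    (hi : i < (tau n t.bottom).length) (hj : j < (tau n t.left).length) :
    MetallicTile n (omegaBlock n t i j) := by
  cases i with
  | zero =>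
    cases j with
    | zero => exact ht.omegaBlock_zero_zero hn
    | succ j => exact (ht.hatT.omegaBlock_succ_zero hn hj).hatT
  | succ i =>
    cases j with
    | zero => exact ht.omegaBlock_succ_zero hn hi
    | succ j => exact ht.omegaBlock_succ_succ hn hi hj

theorem omegaBlock_top (hn : 1 ≤ n) (ht : MetallicTile n t)
    (hi : i < (tau n t.bottom).length) :
    (omegaBlock n t i ((tau n t.left).length - 1)).top = tauLetter n t.top i := by
  have hlast : (((tau n t.left).length - 1 : ℕ) : ℤ) = n - t.left.1 := by
    obtain ⟨-, hl01, hl1, -⟩ := ht.left_mem_Vn hn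
    rw [length_tau hn (ht.left_mem_Vn hn)]
    omega
  replace hi := (lt_length_tau_iff hn (ht.bottom_mem_Vn hn)).1 hi
  cases i with
  | zero =>
    rw [omegaBlock_zero_top, hlast]
    clear hi hlast
    cases ht <;> simp only [whiteTile, horizontalTile, junctionTile, hatT, tauLetter, tauStep,
      Prod.mk.injEq, true_and] <;> omega
  | succ i =>
    rw [omegaBlock_succ_top, hlast]
    clear hlast
    revert hi
    cases ht <;> simp only [whiteTile, horizontalTile, junctionTile, hatT, tauLetter, tauStep,
      Prod.mk.injEq, true_and] <;> omega

theorem omegaBlock_right (hn : 1 ≤ n) (ht : MetallicTile n t)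
    (hj : j < (tau n t.left).length) :
    (omegaBlock n t ((tau n t.bottom).length - 1) j).right = tauLetter n t.right j := by
  have hhat := ht.hatT.omegaBlock_top hn hj
  rwa [omegaBlock_hatT] at hhat

end MetallicTile

theorem isTauSubstitution_omegaBlock (hn : 1 ≤ n) :
    IsTauSubstitution n (Tmet n) (omegaBlock n) := by
  intro t ht
  rw [mem_Tmet_iff] at ht
  refine ⟨⟨fun i j hi hj => mem_Tmet_iff.2 (ht.omegaBlock hn hi hj),
    fun i j _ _ => omegaBlock_right_eq_left n t i j,
    fun i j _ _ => omegaBlock_top_eq_bottom n t i j⟩, ?_, ?_, ?_, ?_⟩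
  · rw [tau_eq_map (ht.right_mem_Vn hn), ht.length_tau_right hn]
    exact List.map_congr_left fun j hj => ht.omegaBlock_right hn (List.mem_range.1 hj)
  · rw [tau_eq_map (ht.top_mem_Vn hn), ht.length_tau_top hn]
    exact List.map_congr_left fun i hi => ht.omegaBlock_top hn (List.mem_range.1 hi)
  · rw [leftWord, tau_eq_map (ht.left_mem_Vn hn), List.length_map, List.length_range]
    exact List.map_congr_left fun j _ => omegaBlock_left n t j
  · rw [bottomWord, tau_eq_map (ht.bottom_mem_Vn hn), List.length_map, List.length_range]
    exact List.map_congr_left fun i _ => omegaBlock_bottom n t i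

end Block

section Primitivity

variable {n : ℤ} {t b : WangTile Lbl}

/-- The tile `b` occurs in `ω_n(t)`. -/
def Yields (n : ℤ) (t b : WangTile Lbl) : Prop :=
  OccursInImage n (omegaBlock n) t b

theorem Yields.hatT (htb : Yields n t b) : Yields n (hatT t) (hatT b) := by
  obtain ⟨i, hi, j, hj, rfl⟩ := htb
  exact ⟨j, hj, i, hi, omegaBlock_hatT n t j i⟩

theorem yields_corner (n : ℤ) (t : WangTile Lbl) : Yields n t (omegaBlock n t 0 0) :=
  ⟨0, length_tau_pos n _, 0, length_tau_pos n _, rfl⟩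

theorem yields_junctionTile {k l r s : ℤ} (hk : tauStep t.bottom 0 = k)
    (hl : t.bottom.1 - t.bottom.2.1 + 1 = l) (hr : tauStep t.left 0 = r)
    (hs : t.left.1 - t.left.2.1 + 1 = s) : Yields n t (junctionTile n k l r s) := by
  subst hk hl hr hs
  exact yields_corner n t

theorem MetallicTile.yields_omegaBlock (hn : 1 ≤ n) (ht : MetallicTile n t) {i j : ℕ}
    (hi : i + t.bottom.1 ≤ n) (hj : j + t.left.1 ≤ n) : Yields n t (omegaBlock n t i j) :=
  ⟨i, (lt_length_tau_iff hn (ht.bottom_mem_Vn hn)).2 hi,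
    j, (lt_length_tau_iff hn (ht.left_mem_Vn hn)).2 hj, rfl⟩

theorem MetallicTile.yields_whiteTile (hn : 1 ≤ n) (ht : MetallicTile n t) (hb : t.bottom.1 = 0)
    (hl : t.left.1 = 0) {i j : ℤ} (hi : 1 ≤ i) (hi' : i ≤ n) (hj : 1 ≤ j) (hj' : j ≤ n) :
    Yields n t (whiteTile i j) := by
  have hleft : n ≤ t.left.2.2 := ht.le_left_of_bottom_eq_zero hb
  have hbottom : n ≤ t.bottom.2.2 := ht.hatT.le_left_of_bottom_eq_zero hl
  obtain ⟨i, rfl⟩ : ∃ k : ℕ, i = k + 1 := ⟨(i - 1).toNat, by omega⟩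
  obtain ⟨j, rfl⟩ : ∃ k : ℕ, j = k + 1 := ⟨(j - 1).toNat, by omega⟩
  convert ht.yields_omegaBlock hn (i := i + 1) (j := j + 1) (by omega) (by omega) using 1
  simp only [omegaBlock, tauStep]
  congr 1 <;> omega

theorem MetallicTile.yields_horizontalTile (hn : 1 ≤ n) (ht : MetallicTile n t) {f e i : ℤ}
    (hi : t.bottom.1 - t.bottom.2.1 < i) (hi' : i + t.bottom.2.1 ≤ n)
    (hf : tauStep t.bottom (i - 1 - t.bottom.1 + t.bottom.2.1) = f)
    (he : tauStep t.bottom (i - t.bottom.1 + t.bottom.2.1) = e) :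
    Yields n t (horizontalTile n f e i) := by
  subst hf he
  obtain ⟨k, rfl⟩ : ∃ k : ℕ, i = t.bottom.1 - t.bottom.2.1 + k + 1 :=
    ⟨(i - 1 - t.bottom.1 + t.bottom.2.1).toNat, by omega⟩
  have hl : t.left.1 ≤ n := by
    obtain ⟨-, hl01, hl1, -⟩ := ht.left_mem_Vn hn
    omega
  convert ht.yields_omegaBlock hn (i := k + 1) (j := 0) (by omega) (by omega) using 1
  simp only [omegaBlock]
  congr 2 <;> ring

theorem metallicTile_junctionTile_1111 (n : ℤ) : MetallicTile n (junctionTile n 1 1 1 1) :=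
  .junction zero_le_one le_rfl le_rfl zero_le_one le_rfl le_rfl le_rfl le_rfl

theorem metallicTile_junctionTile_0000 (n : ℤ) : MetallicTile n (junctionTile n 0 0 0 0) :=
  .junction le_rfl le_rfl zero_le_one le_rfl le_rfl zero_le_one le_rfl le_rfl

theorem yields_white_junctionTile_1111 (n : ℤ) :
    Yields n (whiteTile 1 1) (junctionTile n 1 1 1 1) :=
  yields_junctionTile rfl rfl rfl rfl

theorem yields_junctionTile_1111_0000 (hn : 1 ≤ n) :
    Yields n (junctionTile n 1 1 1 1) (junctionTile n 0 0 0 0) := by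
  apply yields_junctionTile <;> simp only [junctionTile, tauStep] <;> omega

theorem yields_junctionTile_0000_0101 (hn : 1 ≤ n) :
    Yields n (junctionTile n 0 0 0 0) (junctionTile n 0 1 0 1) := by
  apply yields_junctionTile <;> simp only [junctionTile, tauStep] <;> omega

theorem yields_yellow_junctionTile_0100 (hn : 1 ≤ n) :
    Yields n (horizontalTile n 1 1 1) (junctionTile n 0 1 0 0) := by
  apply yields_junctionTile <;> simp only [horizontalTile, tauStep] <;> omega

theorem yields_green_junctionTile_0111 (hn : 1 ≤ n) :
    Yields n (horizontalTile n 0 1 0) (junctionTile n 0 1 1 1) := by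
  apply yields_junctionTile <;> simp only [horizontalTile, tauStep] <;> omega

theorem yields_junctionTile_1111_blue (hn : 1 ≤ n) {i : ℤ} (hi : 0 ≤ i) (hi' : i < n) :
    Yields n (junctionTile n 1 1 1 1) (horizontalTile n 0 0 i) := by
  apply (metallicTile_junctionTile_1111 n).yields_horizontalTile hn <;>
    simp only [junctionTile, tauStep] <;> omega

theorem yields_junctionTile_0000_green (hn : 1 ≤ n) :
    Yields n (junctionTile n 0 0 0 0) (horizontalTile n 0 1 n) := by
  apply (metallicTile_junctionTile_0000 n).yields_horizontalTile hn <;>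
    simp only [junctionTile, tauStep] <;> omega

theorem yields_hatT_blue_yellow (hn : 1 ≤ n) {i : ℤ} (hi : 1 ≤ i) (hi' : i ≤ n) :
    Yields n (hatT (horizontalTile n 0 0 0)) (horizontalTile n 1 1 i) := by
  have ht : MetallicTile n (hatT (horizontalTile n 0 0 0)) :=
    .vertical le_rfl le_rfl zero_le_one le_rfl (by omega)
  apply ht.yields_horizontalTile hn <;> simp only [hatT, horizontalTile, tauStep] <;> omega

theorem yields_hatT_yellow_green (hn : 1 ≤ n) {i : ℤ} (hi : 0 ≤ i) (hi' : i < n) :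
    Yields n (hatT (horizontalTile n 1 1 (i + 1))) (horizontalTile n 0 1 i) := by
  have ht : MetallicTile n (hatT (horizontalTile n 1 1 (i + 1))) :=
    .vertical zero_le_one le_rfl le_rfl (by omega) (by omega)
  apply ht.yields_horizontalTile hn <;> simp only [hatT, horizontalTile, tauStep] <;> omega

/-- The tile `b` occurs in `ω_n^m(t)` for some `m ≤ 4`, where `t` is the junction tile
`j^{1,1,1,1}`. -/
def ReachedFromJunction (n : ℤ) (b : WangTile Lbl) : Prop :=
  ∃ m ≤ 4, ReachesIn (Yields n) m (junctionTile n 1 1 1 1) b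

theorem ReachedFromJunction.hatT (hb : ReachedFromJunction n b) :
    ReachedFromJunction n (hatT b) := by
  obtain ⟨m, hm, hreach⟩ := hb
  exact ⟨m, hm, hreach.map fun _ _ h => h.hatT⟩

theorem reachesIn_blue (hn : 1 ≤ n) {i : ℤ} (hi : 0 ≤ i) (hi' : i < n) :
    ReachesIn (Yields n) 1 (junctionTile n 1 1 1 1) (horizontalTile n 0 0 i) :=
  .single (yields_junctionTile_1111_blue hn hi hi')

theorem reachesIn_yellow (hn : 1 ≤ n) {i : ℤ} (hi : 1 ≤ i) (hi' : i ≤ n) :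
    ReachesIn (Yields n) 2 (junctionTile n 1 1 1 1) (horizontalTile n 1 1 i) :=
  ((reachesIn_blue hn le_rfl (by omega)).map fun _ _ => Yields.hatT).tail
    (yields_hatT_blue_yellow hn hi hi')

theorem reachesIn_green (hn : 1 ≤ n) {i : ℤ} (hi : 0 ≤ i) (hi' : i < n) :
    ReachesIn (Yields n) 3 (junctionTile n 1 1 1 1) (horizontalTile n 0 1 i) :=
  ((reachesIn_yellow hn (by omega) (by omega)).map fun _ _ => Yields.hatT).tail
    (yields_hatT_yellow_green hn hi hi')

theorem reachesIn_junctionTile_0000 (hn : 1 ≤ n) :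
    ReachesIn (Yields n) 1 (junctionTile n 1 1 1 1) (junctionTile n 0 0 0 0) :=
  .single (yields_junctionTile_1111_0000 hn)

theorem reachedFromJunction_horizontalTile (hn : 1 ≤ n) {f e i : ℤ} (hf : 0 ≤ f) (hfe : f ≤ e)
    (he : e ≤ 1) (hi : f ≤ i) (hi' : i < e + n) :
    ReachedFromJunction n (horizontalTile n f e i) := by
  have hcolor : f = 0 ∧ e = 0 ∨ f = 0 ∧ e = 1 ∨ f = 1 ∧ e = 1 := by omega
  rcases hcolor with ⟨rfl, rfl⟩ | ⟨rfl, rfl⟩ | ⟨rfl, rfl⟩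
  · exact ⟨1, by decide, reachesIn_blue hn hi (by omega)⟩
  · rcases lt_or_eq_of_le (show i ≤ n by omega) with hlt | rfl
    · exact ⟨3, by decide, reachesIn_green hn hi hlt⟩
    · exact ⟨2, by decide,
        (reachesIn_junctionTile_0000 hn).tail (yields_junctionTile_0000_green hn)⟩
  · exact ⟨2, by decide, reachesIn_yellow hn hi (by omega)⟩

theorem reachedFromJunction_junctionTile (hn : 1 ≤ n) {k l r s : ℤ} (hk : 0 ≤ k) (hkl : k ≤ l)
    (hl : l ≤ 1) (hr : 0 ≤ r) (hrs : r ≤ s) (hs : s ≤ 1) (hks : k ≤ s) (hrl : r ≤ l) :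
    ReachedFromJunction n (junctionTile n k l r s) := by
  have h0100 : ReachedFromJunction n (junctionTile n 0 1 0 0) :=
    ⟨3, by decide, (reachesIn_yellow hn le_rfl hn).tail (yields_yellow_junctionTile_0100 hn)⟩
  have h0111 : ReachedFromJunction n (junctionTile n 0 1 1 1) :=
    ⟨4, by decide, (reachesIn_green hn le_rfl (by omega)).tail (yields_green_junctionTile_0111 hn)⟩
  have hcases : (l = 0 ∧ k = 0 ∧ r = 0 ∧ s = 0) ∨ (l = 0 ∧ k = 0 ∧ r = 0 ∧ s = 1) ∨
      (l = 1 ∧ k = 0 ∧ r = 0 ∧ s = 0) ∨ (l = 1 ∧ k = 0 ∧ r = 0 ∧ s = 1) ∨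
      (l = 1 ∧ k = 0 ∧ r = 1 ∧ s = 1) ∨ (l = 1 ∧ k = 1 ∧ r = 0 ∧ s = 1) ∨
      (l = 1 ∧ k = 1 ∧ r = 1 ∧ s = 1) := by omega
  rcases hcases with ⟨rfl, rfl, rfl, rfl⟩ | ⟨rfl, rfl, rfl, rfl⟩ | ⟨rfl, rfl, rfl, rfl⟩ |
    ⟨rfl, rfl, rfl, rfl⟩ | ⟨rfl, rfl, rfl, rfl⟩ | ⟨rfl, rfl, rfl, rfl⟩ | ⟨rfl, rfl, rfl, rfl⟩
  · exact ⟨1, by decide, reachesIn_junctionTile_0000 hn⟩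
  · exact h0100.hatT
  · exact h0100
  · exact ⟨2, by decide,
      (reachesIn_junctionTile_0000 hn).tail (yields_junctionTile_0000_0101 hn)⟩
  · exact h0111
  · exact h0111.hatT
  · exact ⟨0, by decide, .refl _⟩

theorem MetallicTile.reachedFromJunction (hn : 1 ≤ n) (hb : MetallicTile n b) :
    ReachedFromJunction n b := by
  cases hb with
  | white hi hi' hj hj' =>
    have hwhite := (metallicTile_junctionTile_1111 n).yields_whiteTile hn rfl rfl hi hi' hj hj'
    exact ⟨1, by decide, .single hwhite⟩
  | horizontal hf hfe he hi hi' =>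
    exact reachedFromJunction_horizontalTile hn hf hfe he hi hi'
  | vertical hf hfe he hi hi' =>
    exact (reachedFromJunction_horizontalTile hn hf hfe he hi hi').hatT
  | junction hk hkl hl hr hrs hs hks hrl =>
    exact reachedFromJunction_junctionTile hn hk hkl hl hr hrs hs hks hrl

theorem MetallicTile.reachesIn_junctionTile_1111 (hn : 1 ≤ n) (ht : MetallicTile n t) (k : ℕ) :
    ReachesIn (Yields n) (k + 3) t (junctionTile n 1 1 1 1) := by
  have hcorner : MetallicTile n (omegaBlock n t 0 0) := ht.omegaBlock_zero_zero hn
  induction k generalizing t with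
  | zero =>
    have hwhite : Yields n (omegaBlock n t 0 0) (whiteTile 1 1) :=
      hcorner.yields_whiteTile hn rfl rfl le_rfl hn le_rfl hn
    exact ((ReachesIn.single (yields_corner n t)).tail hwhite).tail
      (yields_white_junctionTile_1111 n)
  | succ k ih =>
    have hreach := (ReachesIn.single (yields_corner n t)).trans
      (ih hcorner (hcorner.omegaBlock_zero_zero hn))
    rwa [show 1 + (k + 3) = k + 1 + 3 by omega] at hreach

theorem MetallicTile.reachesIn_seven (hn : 1 ≤ n) (ht : MetallicTile n t)
    (hb : MetallicTile n b) : ReachesIn (Yields n) 7 t b := by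
  obtain ⟨m, hm, hjunction⟩ := hb.reachedFromJunction hn
  have hreach := (ht.reachesIn_junctionTile_1111 hn (4 - m)).trans hjunction
  rwa [show 4 - m + 3 + m = 7 by omega] at hreach

end Primitivity

/-- the substitution `ω_n` is primitive. -/
theorem stmt17 (n : ℤ) (hn : 1 ≤ n) :
    ∃ m : ℕ, ∀ a ∈ Tmet n, ∀ b ∈ Tmet n,
      ∃ (w h : ℕ) (q : ℕ → ℕ → WangTile Lbl),
        IterImage n (Tmet n) m a w h q ∧ ∃ i < w, ∃ j < h, q i j = b := by
  refine ⟨7, fun a ha b hb => ?_⟩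
  obtain ⟨w, h, q, hq, -, hoccurs⟩ :=
    (isTauSubstitution_omegaBlock hn).exists_iterImage ha 7
  have hab : ReachesIn (Yields n) 7 a b :=
    (mem_Tmet_iff.1 ha).reachesIn_seven hn (mem_Tmet_iff.1 hb)
  exact ⟨w, h, q, hq, hoccurs b hab⟩
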